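/- Let q : ℤ → (ℝ² → ℝ) be C³ functions satisfying the two-dimensional Toda lattice q_{xy}(j) = h(j) − h(j−1), where h(j) := exp(q(j+1) − q(j)) and b(j) := q_x(j). Let B¹, B² : ℤ → (ℝ² → ℝ) be C¹ functions satisfying ∂_x b(j) = B¹(j) − B¹(j−1), ∂_y B¹(j) = ∂_x h(j), ∂_x B¹(j) = B¹(j)(b(j+1) − b(j)) + B²(j) − B²(j−1), and ∂_y B²(j) = h(j) B¹(j+1) − h(j+1) B¹(j), for all j. Define F(j) := b(j)² + B¹(j) + B¹(j−1). Then for all j ∈ ℤ: ∂_y ∂_x F(j) = h(j)(F(j+1) − F(j)) − h(j−1)(F(j) − F(j−1)). (This identity expresses that the flow q_t(j) = b(j)² + b^{(1)}(j) + b^{(1)}(j−1) defines a symmetry of the Toda lattice.) -/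

import Mathlib

/-- Partial derivative in the first (x) variable. -/
noncomputable def pdx (f : ℝ × ℝ → ℝ) : ℝ × ℝ → ℝ :=
  fun p => deriv (fun t => f (t, p.2)) p.1

/-- Partial derivative in the second (y) variable. -/
noncomputable def pdy (f : ℝ × ℝ → ℝ) : ℝ × ℝ → ℝ :=
  fun p => deriv (fun t => f (p.1, t)) p.2

theorem hasDerivAt_fst {f : ℝ × ℝ → ℝ} (hf : Differentiable ℝ f) (p : ℝ × ℝ) :
    HasDerivAt (fun t => f (t, p.2)) (pdx f p) p.1 := by
  have h : DifferentiableAt ℝ (fun t => f (t, p.2)) p.1 := by fun_prop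
  exact h.hasDerivAt

theorem hasDerivAt_snd {f : ℝ × ℝ → ℝ} (hf : Differentiable ℝ f) (p : ℝ × ℝ) :
    HasDerivAt (fun t => f (p.1, t)) (pdy f p) p.2 := by
  have h : DifferentiableAt ℝ (fun t => f (p.1, t)) p.2 := by fun_prop
  exact h.hasDerivAt

theorem differentiable_pdx {f : ℝ × ℝ → ℝ} (hf : ContDiff ℝ 3 f) :
    Differentiable ℝ (pdx f) := by
  have hd : Differentiable ℝ f := hf.differentiable (by norm_num)
  have h1 : pdx f = fun p => fderiv ℝ f p (1, 0) := by
    funext p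
    have h2 : HasDerivAt (fun t : ℝ => (t, p.2)) ((1 : ℝ), (0 : ℝ)) p.1 :=
      (hasDerivAt_id p.1).prodMk (hasDerivAt_const p.1 p.2)
    have h3 : HasFDerivAt f (fderiv ℝ f p) ((fun t : ℝ => (t, p.2)) p.1) :=
      (hd p).hasFDerivAt
    exact (h3.comp_hasDerivAt p.1 h2).deriv
  rw [h1]
  have h4 : ContDiff ℝ 2 (fderiv ℝ f) := hf.fderiv_right (by norm_num)
  have h5 : Differentiable ℝ (fderiv ℝ f) := h4.differentiable (by norm_num)
  fun_prop

/-- the flow `q_t(j) = b(j)² + b⁽¹⁾(j) + b⁽¹⁾(j−1)` defines a symmetry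
of the 2D Toda lattice: `∂_y∂_x F(j) = h(j)(F(j+1) − F(j)) − h(j−1)(F(j) − F(j−1))`.
Here `B1, B2` play the roles of the nonlocal variables `b⁽¹⁾, b⁽²⁾`. -/
theorem toda_second_order_symmetry
    (q h b : ℤ → ℝ × ℝ → ℝ)
    (hq : ∀ j, ContDiff ℝ 3 (q j))
    (hh : ∀ j p, h j p = Real.exp (q (j + 1) p - q j p))
    (hb : ∀ j, b j = pdx (q j))
    (toda : ∀ (j : ℤ) (p : ℝ × ℝ), pdy (pdx (q j)) p = h j p - h (j - 1) p)
    (B1 B2 : ℤ → ℝ × ℝ → ℝ)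
    (hB1 : ∀ j, ContDiff ℝ 1 (B1 j))
    (hB2 : ∀ j, ContDiff ℝ 1 (B2 j))
    (e1 : ∀ (j : ℤ) (p : ℝ × ℝ), pdx (b j) p = B1 j p - B1 (j - 1) p)
    (e2 : ∀ (j : ℤ) (p : ℝ × ℝ), pdy (B1 j) p = pdx (h j) p)
    (e3 : ∀ (j : ℤ) (p : ℝ × ℝ),
        pdx (B1 j) p = B1 j p * (b (j + 1) p - b j p) + B2 j p - B2 (j - 1) p)
    (e4 : ∀ (j : ℤ) (p : ℝ × ℝ),
        pdy (B2 j) p = h j p * B1 (j + 1) p - h (j + 1) p * B1 j p)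
    (F : ℤ → ℝ × ℝ → ℝ)
    (hF : ∀ j p, F j p = (b j p) ^ 2 + B1 j p + B1 (j - 1) p) :
    ∀ (j : ℤ) (p : ℝ × ℝ),
      pdy (pdx (F j)) p
        = h j p * (F (j + 1) p - F j p) - h (j - 1) p * (F j p - F (j - 1) p) := by
  intro j p
  have dq : ∀ j, Differentiable ℝ (q j) := fun j => (hq j).differentiable (by norm_num)
  have db : ∀ j, Differentiable ℝ (b j) := fun j => by
    rw [hb]; exact differentiable_pdx (hq j)
  have d1 : ∀ j, Differentiable ℝ (B1 j) := fun j => (hB1 j).differentiable (by norm_num)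
  have d2 : ∀ j, Differentiable ℝ (B2 j) := fun j => (hB2 j).differentiable (by norm_num)
  have hx : ∀ j p, pdx (h j) p = h j p * (b (j + 1) p - b j p) := by
    intro j p
    have h1 := ((hasDerivAt_fst (dq (j + 1)) p).sub (hasDerivAt_fst (dq j) p)).exp
    rw [hh, hb, hb]
    refine Eq.trans ?_ h1.deriv
    rw [pdx]
    congr 1
    funext t
    exact hh j (t, p.2)
  have b_dy : ∀ j p, pdy (b j) p = h j p - h (j - 1) p := fun j p => by rw [hb]; exact toda j p
  have Fx : pdx (F j) = fun p => B1 j p * (b (j + 1) p + b j p)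
      - B1 (j - 1) p * (b j p + b (j - 1) p) + B2 j p - B2 (j - 1 - 1) p := by
    funext p
    have h1 := (((hasDerivAt_fst (db j) p).pow 2).add (hasDerivAt_fst (d1 j) p)).add
      (hasDerivAt_fst (d1 (j - 1)) p)
    have h2 : pdx (F j) p = (2 : ℕ) * b j p ^ (2 - 1) * pdx (b j) p + pdx (B1 j) p
        + pdx (B1 (j - 1)) p := by
      refine Eq.trans ?_ h1.deriv
      rw [pdx]
      congr 1
      funext t
      exact hF j (t, p.2)
    rw [h2, e1, e3, e3, sub_add_cancel]
    simp
    ring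
  rw [Fx]
  have h1 := ((((hasDerivAt_snd (d1 j) p).mul
      ((hasDerivAt_snd (db (j + 1)) p).add (hasDerivAt_snd (db j) p))).sub
      ((hasDerivAt_snd (d1 (j - 1)) p).mul
      ((hasDerivAt_snd (db j) p).add (hasDerivAt_snd (db (j - 1)) p)))).add
      (hasDerivAt_snd (d2 j) p)).sub (hasDerivAt_snd (d2 (j - 1 - 1)) p)
  refine Eq.trans h1.deriv ?_
  simp only [Pi.add_apply, b_dy, e2, e4, hx, hF, sub_add_cancel, add_sub_cancel_right]
  ring
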